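/- arXiv:2603.17772 — 4 statements merged into one kernel-verified Lean document; each statement's English description precedes it below -/
import Mathlib

section
/- Let n ≥ 3. If a social choice function f : S₀ⁿ → A is onto and pairwise strategy-proof, then f is a target rule with a default; that is, there exist x, y ∈ A such that f(R^{0N}) = y and for every profile R ≠ R^{0N}: f(R) = x if τ̲(R) ≤ x ≤ τ̄(R), f(R) = τ̲(R) if x < τ̲(R), and f(R) = τ̄(R) if τ̄(R) < x. -/
/-- The set of alternatives: the closed interval [0,1]. -/
abbrev A : Type := Set.Icc (0:ℝ) 1

def zeroA : A := ⟨0, by constructor <;> norm_num⟩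
def oneA : A := ⟨1, by constructor <;> norm_num⟩

/-- A preference: a complete (total) and transitive binary relation on A. -/
structure Pref : Type where
  rel : A → A → Prop
  total : ∀ a b : A, rel a b ∨ rel b a
  trans : ∀ a b c : A, rel a b → rel b c → rel a c

/-- Strict part of a preference. -/
def Pref.P (R : Pref) (a b : A) : Prop := R.rel a b ∧ ¬ R.rel b a

/-- `p` is a peak of `R`: `R` is single-peaked with peak `p`. -/
def Pref.IsPeak (R : Pref) (p : A) : Prop :=
  ∀ a b : A, ((p ≤ a ∧ a < b) ∨ (b < a ∧ a ≤ p)) → R.P a b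

/-- Single-peaked preferences. -/
def SinglePeaked (R : Pref) : Prop := ∃ p : A, R.IsPeak p

/-- The completely indifferent preference R⁰. -/
def R0 : Pref :=
  ⟨fun _ _ => True, fun _ _ => Or.inl trivial, fun _ _ _ _ _ => trivial⟩

/-- The augmented domain S₀ = S ∪ {R⁰}. -/
def S0 : Type := {R : Pref // SinglePeaked R ∨ R = R0}

/-- The completely indifferent profile R^{0N}. -/
def indiffProfile (n : ℕ) : Fin n → S0 := fun _ => ⟨R0, Or.inr rfl⟩

open Classical in
/-- The peak of a single-peaked preference (junk value `zeroA` otherwise). -/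
noncomputable def peak (R : Pref) : A :=
  if h : SinglePeaked R then h.choose else zeroA

/-- τ̲(R): the smallest peak among non-indifferent agents (as a real number). -/
noncomputable def tmin {n : ℕ} (R : Fin n → S0) : ℝ :=
  sInf {x : ℝ | ∃ i : Fin n, (R i).1 ≠ R0 ∧ ((peak (R i).1 : ℝ) = x)}

/-- τ̄(R): the largest peak among non-indifferent agents (as a real number). -/
noncomputable def tmax {n : ℕ} (R : Fin n → S0) : ℝ :=
  sSup {x : ℝ | ∃ i : Fin n, (R i).1 ≠ R0 ∧ ((peak (R i).1 : ℝ) = x)}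

/-- Onto-ness. -/
def Onto {n : ℕ} (f : (Fin n → S0) → A) : Prop := ∀ a : A, ∃ R : Fin n → S0, f R = a

/-- (Individual) strategy-proofness. -/
def StrategyProof {n : ℕ} (f : (Fin n → S0) → A) : Prop :=
  ∀ (R : Fin n → S0) (i : Fin n) (Ri' : S0),
    (R i).1.rel (f R) (f (Function.update R i Ri'))

/-- No profitable deviation by the coalition `S`. -/
def CoalitionSP {n : ℕ} (f : (Fin n → S0) → A) (S : Finset (Fin n)) : Prop :=
  ¬ ∃ R R' : Fin n → S0,
      (∀ i ∉ S, R' i = R i) ∧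
      (∀ i ∈ S, (R i).1.rel (f R') (f R)) ∧
      (∃ j ∈ S, (R j).1.P (f R') (f R))

/-- Group strategy-proofness. -/
def GroupSP {n : ℕ} (f : (Fin n → S0) → A) : Prop :=
  ∀ S : Finset (Fin n), S.Nonempty → CoalitionSP f S

/-- Pairwise strategy-proofness. -/
def PairwiseSP {n : ℕ} (f : (Fin n → S0) → A) : Prop :=
  ∀ S : Finset (Fin n), S.Nonempty → S.card ≤ 2 → CoalitionSP f S

/-- No deviation making every member of `S` strictly better off. -/
def WeakCoalitionSP {n : ℕ} (f : (Fin n → S0) → A) (S : Finset (Fin n)) : Prop :=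
  ¬ ∃ R R' : Fin n → S0,
      (∀ i ∉ S, R' i = R i) ∧
      (∀ i ∈ S, (R i).1.P (f R') (f R))

/-- Weak group strategy-proofness. -/
def WeakGroupSP {n : ℕ} (f : (Fin n → S0) → A) : Prop :=
  ∀ S : Finset (Fin n), S.Nonempty → WeakCoalitionSP f S

/-- `a` is efficient at the profile `R`. -/
def EfficientAt {n : ℕ} (R : Fin n → S0) (a : A) : Prop :=
  ¬ ∃ b : A, b ≠ a ∧ (∀ i : Fin n, (R i).1.rel b a) ∧ (∃ j : Fin n, (R j).1.P b a)

/-- Efficiency of a social choice function. -/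
def Efficient {n : ℕ} (f : (Fin n → S0) → A) : Prop := ∀ R : Fin n → S0, EfficientAt R (f R)

/-- The tops-only property. -/
def TopsOnly {n : ℕ} (f : (Fin n → S0) → A) : Prop :=
  ∀ R R' : Fin n → S0,
    (∀ i : Fin n, (R i).1 = R0 ↔ (R' i).1 = R0) →
    (∀ i : Fin n, (R i).1 ≠ R0 → peak (R i).1 = peak (R' i).1) →
    f R = f R'

/-- Target rules with a default. -/
def IsTargetRule {n : ℕ} (f : (Fin n → S0) → A) : Prop :=
  ∃ x y : A, f (indiffProfile n) = y ∧
    ∀ R : Fin n → S0, R ≠ indiffProfile n →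
      ((tmin R ≤ (x : ℝ) ∧ (x : ℝ) ≤ tmax R) → f R = x) ∧
      ((x : ℝ) < tmin R → (f R : ℝ) = tmin R) ∧
      (tmax R < (x : ℝ) → (f R : ℝ) = tmax R)

/-!
By pairwise strategy-proofness an indifferent agent who acquires a preference makes nobody better
off, since otherwise the two could do it jointly. Unanimity and strategy-proofness first put the
outcome in the interval spanned by the peaks. An agent who leaves the two extreme peaks in place is
then irrelevant: dropping him weakly helps both extreme agents, whose interests on that interval
are opposed. With a third agent to pass the extreme peaks around, the outcome depends only on the
two extremes.

If a third agent stretches the interval `[p, q]` to `[p', q]` and moves the outcome from `z` to `w`,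
every preference with peak `p` or `q` ranks `z` at least as high as `w`; preferences whose upper
contour set at `w` is exactly the segment from the peak to `w` then force `z` to be the median of
`p`, `q`, `w`. Stretching one end at a time up to `[0, 1]` makes every outcome the median of the two
extreme peaks and the outcome for `[0, 1]`, which is the target.
-/

section TargetRule

open Set Function

theorem eq_of_forall_update_eq {ι β : Type*} {α : ι → Type*} [Finite ι] [DecidableEq ι]
    {g : (∀ i, α i) → β} {R R' : ∀ i, α i}
    (step : ∀ Q k, (∀ l, Q l = R l ∨ Q l = R' l) → Q k = R k → g Q = g R →
      g (update Q k (R' k)) = g R) :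
    g R' = g R := by
  have := Fintype.ofFinite ι
  suffices h : ∀ T : Finset ι, g (T.piecewise R' R) = g R by
    simpa only [Finset.piecewise_univ] using h Finset.univ
  intro T
  induction T using Finset.induction_on with
  | empty => rw [Finset.piecewise_empty]
  | insert k T hk ih =>
    rw [Finset.piecewise_insert]
    refine step _ k (fun l => ?_) (T.piecewise_eq_of_notMem _ _ hk) ih
    by_cases hl : l ∈ T <;> simp [hl]

namespace Pref

variable {R : Pref} {p w z : A}

theorem P_of_not_rel (h : ¬ R.rel z w) : R.P w z :=
  ⟨(R.total w z).resolve_right h, h⟩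

theorem isPeak_iff_forall_mem_uIcc :
    R.IsPeak p ↔ ∀ a b, a ∈ uIcc p b → a ≠ b → R.P a b := by
  refine ⟨fun h a b hab hne => h a b ?_, fun h a b hab => ?_⟩
  · rw [mem_uIcc] at hab
    grind
  · rcases hab with ⟨hpa, hab⟩ | ⟨hba, hap⟩
    · exact h a b (mem_uIcc.2 (Or.inl ⟨hpa, hab.le⟩)) hab.ne
    · exact h a b (mem_uIcc.2 (Or.inr ⟨hba.le, hap⟩)) hba.ne'

theorem IsPeak.eq_of_rel (h : R.IsPeak p) (hw : w ∈ uIcc p z) (hr : R.rel z w) : z = w := by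
  by_contra hne
  exact (isPeak_iff_forall_mem_uIcc.1 h w z hw (Ne.symm hne)).2 hr

/-- The preference represented by the utility function `u`. -/
def ofUtility (u : A → ℝ) : Pref where
  rel a b := u b ≤ u a
  total _ _ := le_total _ _
  trans _ _ _ hab hbc := hbc.trans hab

end Pref

theorem abs_sub_lt_abs_sub_of_mem_uIcc {G : Type*} [AddCommGroup G] [LinearOrder G]
    [IsOrderedAddMonoid G] {a b p : G} (hab : a ∈ uIcc p b) (hne : a ≠ b) :
    |a - p| < |b - p| := by
  rcases mem_uIcc.1 hab with ⟨hpa, hab⟩ | ⟨hba, hap⟩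
  · rw [abs_of_nonneg (sub_nonneg.2 hpa), abs_of_nonneg (sub_nonneg.2 (hpa.trans hab))]
    exact sub_lt_sub_right (hab.lt_of_ne hne) p
  · rw [abs_of_nonpos (sub_nonpos.2 hap), abs_of_nonpos (sub_nonpos.2 (hba.trans hap))]
    exact neg_lt_neg (sub_lt_sub_right (hba.lt_of_ne' hne) p)

theorem exists_isPeak_mem_uIcc_of_rel (p c : A) :
    ∃ r : S0, r.1.IsPeak p ∧ ∀ z, r.1.rel z c → z ∈ uIcc p c := by
  classical
  -- Outside `[p, c]` the distance to `p` is penalised by the length of `A`.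
  let u : A → ℝ := fun a => -|(a : ℝ) - p| - if a ∈ uIcc p c then 0 else 1
  have hpeak : (Pref.ofUtility u).IsPeak p := by
    refine Pref.isPeak_iff_forall_mem_uIcc.2 fun a b hab hne => Pref.P_of_not_rel (not_le.2 ?_)
    have hlt : |(a : ℝ) - p| < |(b : ℝ) - p| :=
      abs_sub_lt_abs_sub_of_mem_uIcc (mem_uIcc.2 (mem_uIcc.1 hab)) (Subtype.coe_injective.ne hne)
    have hmem : b ∈ uIcc p c → a ∈ uIcc p c := fun hb => uIcc_subset_uIcc_left hb hab
    grind
  refine ⟨⟨Pref.ofUtility u, Or.inl ⟨p, hpeak⟩⟩, hpeak, fun z hz => ?_⟩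
  by_contra hzc
  have hzp : z ≠ p := fun h => hzc (h ▸ left_mem_uIcc)
  have hpos : 0 < |(z : ℝ) - p| := abs_pos.2 (sub_ne_zero.2 (Subtype.coe_injective.ne hzp))
  have hu : u c ≤ u z := hz
  simp only [u, hzc, right_mem_uIcc, if_true, if_false] at hu
  have hc : |(c : ℝ) - p| ≤ 1 := Real.dist_le_of_mem_Icc_01 c.2 p.2
  linarith

variable {n : ℕ} {f : (Fin n → S0) → A}

namespace PairwiseSP

theorem rel_update (hP : PairwiseSP f) {R : Fin n → S0} {k : Fin n} {r : S0}
    (hk : (R k).1.rel (f (update R k r)) (f R)) (i : Fin n) :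
    (R i).1.rel (f R) (f (update R k r)) := by
  by_contra hi
  have hstrict := Pref.P_of_not_rel hi
  refine hP {i, k} (Finset.insert_nonempty _ _) Finset.card_le_two
    ⟨R, update R k r, fun l hl => ?_, fun l hl => ?_, i, Finset.mem_insert_self _ _, hstrict⟩
  · exact update_of_ne (fun h => hl (by simp [h])) _ _
  · obtain rfl | rfl : l = i ∨ l = k := by simpa using hl
    exacts [hstrict.1, hk]

theorem strategyProof (hP : PairwiseSP f) : StrategyProof f := fun R i r =>
  ((R i).1.total (f R) (f (update R i r))).elim id fun h => hP.rel_update h i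

theorem rel_update_of_eq_R0 (hP : PairwiseSP f) {R : Fin n → S0} {k : Fin n}
    (hk : (R k).1 = R0) (i : Fin n) (r : S0) : (R i).1.rel (f R) (f (update R k r)) :=
  hP.rel_update (hk.symm ▸ (trivial : R0.rel _ _)) i

end PairwiseSP

theorem StrategyProof.rel_of_update (hf : StrategyProof f) (R : Fin n → S0) (k : Fin n) (r : S0) :
    r.1.rel (f (update R k r)) (f R) := by
  simpa using hf (update R k r) k (R k)

theorem StrategyProof.apply_const_of_isPeak (hf : StrategyProof f) (hO : Onto f) {p : A} {r : S0}
    (hr : r.1.IsPeak p) : f (fun _ => r) = p := by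
  obtain ⟨R, rfl⟩ := hO p
  refine eq_of_forall_update_eq fun Q k _ _ hQ => ?_
  exact hr.eq_of_rel left_mem_uIcc (hQ ▸ hf.rel_of_update Q k r)

/-- The preference `r` is indifferent or has its peak in `s`: an indifferent agent puts no
restriction on the range of the peaks of a profile. -/
def PeakIn (s : Set A) (r : S0) : Prop := r.1 = R0 ∨ ∃ m ∈ s, r.1.IsPeak m

theorem PeakIn.mono {s t : Set A} (hst : s ⊆ t) {r : S0} (hr : PeakIn s r) : PeakIn t r :=
  hr.imp_right fun ⟨m, hm, hrm⟩ => ⟨m, hst hm, hrm⟩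

theorem PeakIn.update {s : Set A} {R : Fin n → S0} (hR : ∀ l, PeakIn s (R l)) {r : S0}
    (hr : PeakIn s r) (k l : Fin n) : PeakIn s (update R k r l) :=
  (forall_update_iff R fun _ => PeakIn s).2 ⟨hr, fun l _ => hR l⟩ l

theorem apply_eq_of_separates (hP : PairwiseSP f) (hO : Onto f) {R : Fin n → S0} {p : A} {i : Fin n}
    (hi : (R i).1.IsPeak p) (hR : ∀ k, PeakIn {m | p ∈ uIcc (f R) m} (R k)) : f R = p := by
  -- Give everybody, one agent at a time, a preference with peak `p` for which only `[p, f R]` is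
  -- as good as `f R`: the outcome never moves, and by unanimity it ends at `p`.
  obtain ⟨r, hr, hcontour⟩ := exists_isPeak_mem_uIcc_of_rel p (f R)
  rw [← hP.strategyProof.apply_const_of_isPeak hO hr]
  refine (eq_of_forall_update_eq fun Q k hQ hk hfQ => ?_).symm
  have hmem : f (update Q k r) ∈ uIcc p (f R) :=
    hcontour _ (hfQ ▸ hP.strategyProof.rel_of_update Q k r)
  suffices h : ∃ l m, p ∈ uIcc (f R) m ∧ (Q l).1.IsPeak m ∧
      (Q l).1.rel (f Q) (f (update Q k r)) by
    obtain ⟨l, m, hm, hl, hrel⟩ := h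
    refine (hl.eq_of_rel ?_ (hfQ ▸ hrel)).symm
    rw [mem_uIcc] at *
    grind
  rcases hR k with h0 | ⟨m, hm, hkm⟩
  · have hQi : (Q i).1.IsPeak p := (hQ i).elim (fun h => h ▸ hi) fun h => h ▸ hr
    exact ⟨i, p, right_mem_uIcc, hQi, hP.rel_update_of_eq_R0 (hk ▸ h0) i r⟩
  · exact ⟨k, m, hm, hk ▸ hkm, hP.strategyProof Q k r⟩

/-- The peaks of the non-indifferent agents of the profile `R` have `p` and `q` as their extremes,
in either order: intervals are unordered so that left and right need not be distinguished. -/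
structure Spans (R : Fin n → S0) (p q : A) : Prop where
  exists_isPeak_left : ∃ i, (R i).1.IsPeak p
  exists_isPeak_right : ∃ j, (R j).1.IsPeak q
  peakIn : ∀ k, PeakIn (uIcc p q) (R k)

namespace Spans

variable {R R' : Fin n → S0} {p q : A} {i j k : Fin n} {r : S0}

theorem symm (h : Spans R p q) : Spans R q p :=
  ⟨h.exists_isPeak_right, h.exists_isPeak_left, uIcc_comm p q ▸ h.peakIn⟩

theorem update_left (h : Spans R p q) (hr : r.1.IsPeak p) (hj : (R j).1.IsPeak q) (hjk : j ≠ k) :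
    Spans (update R k r) p q where
  exists_isPeak_left := ⟨k, by rwa [update_self]⟩
  exists_isPeak_right := ⟨j, by rwa [update_of_ne hjk]⟩
  peakIn := PeakIn.update h.peakIn (Or.inr ⟨p, left_mem_uIcc, hr⟩) k

theorem update_third (h : Spans R p q) (hr : PeakIn (uIcc p q) r) (hi : (R i).1.IsPeak p)
    (hik : i ≠ k) (hj : (R j).1.IsPeak q) (hjk : j ≠ k) : Spans (update R k r) p q where
  exists_isPeak_left := ⟨i, by rwa [update_of_ne hik]⟩
  exists_isPeak_right := ⟨j, by rwa [update_of_ne hjk]⟩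
  peakIn := PeakIn.update h.peakIn hr k

theorem apply_mem_uIcc (h : Spans R p q) (hP : PairwiseSP f) (hO : Onto f) : f R ∈ uIcc p q := by
  obtain ⟨i, hi⟩ := h.exists_isPeak_left
  obtain ⟨j, hj⟩ := h.exists_isPeak_right
  by_contra hout
  have hsep : uIcc p q ⊆ {m | p ∈ uIcc (f R) m} ∨ uIcc p q ⊆ {m | q ∈ uIcc (f R) m} := by
    simp only [subset_def, mem_ofPred_eq, mem_uIcc] at *
    grind
  rcases hsep with hsep | hsep
  · exact hout (apply_eq_of_separates hP hO hi (fun k => (h.peakIn k).mono hsep) ▸ left_mem_uIcc)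
  · exact hout (apply_eq_of_separates hP hO hj (fun k => (h.peakIn k).mono hsep) ▸ right_mem_uIcc)

theorem apply_update_eq_of_eq_R0 (h : Spans R p q) (h' : Spans (update R k r) p q)
    (hP : PairwiseSP f) (hO : Onto f) (hk : (R k).1 = R0) : f (update R k r) = f R := by
  obtain ⟨i, hi⟩ := h.exists_isPeak_left
  obtain ⟨j, hj⟩ := h.exists_isPeak_right
  have hmem := h.apply_mem_uIcc hP hO
  have hmem' := h'.apply_mem_uIcc hP hO
  have hcloser : f (update R k r) ∈ uIcc p (f R) ∨ f (update R k r) ∈ uIcc q (f R) := by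
    simp only [mem_uIcc] at *
    grind
  rcases hcloser with hcloser | hcloser
  · exact (hi.eq_of_rel hcloser (hP.rel_update_of_eq_R0 hk i r)).symm
  · exact (hj.eq_of_rel hcloser (hP.rel_update_of_eq_R0 hk j r)).symm

theorem apply_update_eq_of_isPeak (h : Spans R p q) (h' : Spans (update R k r) p q)
    (hP : PairwiseSP f) (hO : Onto f) (hk : (R k).1.IsPeak p) (hr : r.1.IsPeak p) :
    f (update R k r) = f R := by
  have hmem := h.apply_mem_uIcc hP hO
  have hmem' := h'.apply_mem_uIcc hP hO
  have hcloser : f (update R k r) ∈ uIcc p (f R) ∨ f R ∈ uIcc p (f (update R k r)) := by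
    simp only [mem_uIcc] at *
    grind
  rcases hcloser with hcloser | hcloser
  · exact (hk.eq_of_rel hcloser (hP.strategyProof R k r)).symm
  · exact hr.eq_of_rel hcloser (hP.strategyProof.rel_of_update R k r)

theorem apply_update_third_eq (h : Spans R p q) (h' : Spans (update R k r) p q)
    (hP : PairwiseSP f) (hO : Onto f) (hi : (R i).1.IsPeak p) (hik : i ≠ k)
    (hj : (R j).1.IsPeak q) (hjk : j ≠ k) : f (update R k r) = f R := by
  have h₀ := h.update_third (r := indiffProfile n k) (Or.inl rfl) hi hik hj hjk
  have eq_of_spans {s : S0} (hs : Spans (update R k s) p q) :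
      f (update R k s) = f (update R k (indiffProfile n k)) := by
    have hs' : Spans (update (update R k (indiffProfile n k)) k s) p q := by rwa [update_idem]
    have h_ind : (update R k (indiffProfile n k) k).1 = R0 := by rw [update_self, indiffProfile]
    simpa only [update_idem] using h₀.apply_update_eq_of_eq_R0 hs' hP hO h_ind
  rw [eq_of_spans h', ← eq_of_spans (s := R k) (by rwa [update_eq_self]), update_eq_self]

theorem apply_update_eq (h : Spans R p q) (h' : Spans (update R k r) p q) (hP : PairwiseSP f)
    (hO : Onto f) : f (update R k r) = f R := by
  have isPeak_of_only {e : A} {s : S0} (hne : ¬ ∃ i ≠ k, (R i).1.IsPeak e)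
      (he : ∃ i, (update R k s i).1.IsPeak e) : s.1.IsPeak e := by
    obtain ⟨i, hi⟩ := he
    obtain rfl | hik := eq_or_ne i k
    · rwa [update_self] at hi
    · rw [update_of_ne hik] at hi
      exact absurd ⟨i, hik, hi⟩ hne
  by_cases hp : ∃ i ≠ k, (R i).1.IsPeak p
  · by_cases hq : ∃ j ≠ k, (R j).1.IsPeak q
    · obtain ⟨i, hik, hi⟩ := hp
      obtain ⟨j, hjk, hj⟩ := hq
      exact h.apply_update_third_eq h' hP hO hi hik hj hjk
    · exact h.symm.apply_update_eq_of_isPeak h'.symm hP hO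
        (isPeak_of_only hq (by simpa using h.exists_isPeak_right))
        (isPeak_of_only hq h'.exists_isPeak_right)
  · exact h.apply_update_eq_of_isPeak h' hP hO
      (isPeak_of_only hp (by simpa using h.exists_isPeak_left))
      (isPeak_of_only hp h'.exists_isPeak_left)

theorem apply_eq_of_common (h : Spans R p q) (h' : Spans R' p q) (hP : PairwiseSP f) (hO : Onto f)
    (hi : (R i).1.IsPeak p) (hi' : (R' i).1.IsPeak p) (hj : (R j).1.IsPeak q)
    (hj' : (R' j).1.IsPeak q) : f R' = f R := by
  have spans_of {Q : Fin n → S0} (hQ : ∀ l, Q l = R l ∨ Q l = R' l) : Spans Q p q :=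
    { exists_isPeak_left := ⟨i, by rcases hQ i with e | e <;> rwa [e]⟩
      exists_isPeak_right := ⟨j, by rcases hQ j with e | e <;> rwa [e]⟩
      peakIn := fun l => by rcases hQ l with e | e <;> rw [e]; exacts [h.peakIn l, h'.peakIn l] }
  refine eq_of_forall_update_eq fun Q k hQ _ hfQ => ?_
  have hQ' : ∀ l, update Q k (R' k) l = R l ∨ update Q k (R' k) l = R' l :=
    (forall_update_iff Q fun l t => t = R l ∨ t = R' l).2 ⟨Or.inr rfl, fun l _ => hQ l⟩
  exact ((spans_of hQ).apply_update_eq (spans_of hQ') hP hO).trans hfQ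

theorem apply_eq_of_ne (h : Spans R p q) (h' : Spans R' p q) (hP : PairwiseSP f) (hO : Onto f)
    (hj : (R j).1.IsPeak q) (hi : (R' i).1.IsPeak p) (hij : i ≠ j) : f R' = f R := by
  have hM := h.update_left (k := i) hi hj hij.symm
  have hM' := (h'.symm.update_left (k := j) hj hi hij).symm
  calc f R' = f (update R' j (R j)) := (h'.apply_update_eq hM' hP hO).symm
    _ = f (update R i (R' i)) :=
      hM.apply_eq_of_common hM' hP hO (i := i) (j := j) (by rwa [update_self])
        (by rwa [update_of_ne hij]) (by rwa [update_of_ne hij.symm])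
        (by rwa [update_self])
    _ = f R := h.apply_update_eq hM hP hO

theorem apply_eq (h : Spans R p q) (h' : Spans R' p q) (hn : 2 < n) (hP : PairwiseSP f)
    (hO : Onto f) : f R' = f R := by
  obtain ⟨i, hi⟩ := h.exists_isPeak_left
  obtain ⟨j, hj⟩ := h.exists_isPeak_right
  obtain ⟨i', hi'⟩ := h'.exists_isPeak_left
  obtain ⟨j', hj'⟩ := h'.exists_isPeak_right
  by_cases hij : i' = j
  · by_cases hji : j' = i
    · -- The two extreme agents trade places; a third agent first takes over the peak `p`.
      obtain ⟨k, hki, hkj⟩ := Fin.exists_ne_and_ne_of_two_lt i j hn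
      have hM := h.update_left (k := k) hi hj hkj.symm
      rw [← h.apply_update_eq hM hP hO]
      exact hM.symm.apply_eq_of_ne h'.symm hP hO (j := k) (by rwa [update_self]) hj'
        (hji.trans_ne hki.symm)
    · exact h.symm.apply_eq_of_ne h'.symm hP hO hi hj' hji
  · exact h.apply_eq_of_ne h' hP hO hj hi' hij

end Spans

/-- The profile in which `i` has the preference `r`, `j` has the preference `s`, and everybody
else is indifferent. -/
def pairProfile (i j : Fin n) (r s : S0) : Fin n → S0 :=
  update (update (indiffProfile n) j s) i r

section PairProfile

variable {i j k : Fin n} {r s : S0} {p q : A}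

theorem pairProfile_left : pairProfile i j r s i = r := update_self _ _ _

theorem pairProfile_right (hij : i ≠ j) : pairProfile i j r s j = s := by
  rw [pairProfile, update_of_ne hij.symm, update_self]

theorem pairProfile_of_ne (hki : k ≠ i) (hkj : k ≠ j) : (pairProfile i j r s k).1 = R0 := by
  rw [pairProfile, update_of_ne hki, update_of_ne hkj, indiffProfile]

theorem spans_pairProfile (hij : i ≠ j) (hr : r.1.IsPeak p) (hs : s.1.IsPeak q) :
    Spans (pairProfile i j r s) p q where
  exists_isPeak_left := ⟨i, by rwa [pairProfile_left]⟩
  exists_isPeak_right := ⟨j, by rwa [pairProfile_right hij]⟩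
  peakIn := PeakIn.update (PeakIn.update (fun _ => Or.inl rfl) (Or.inr ⟨q, right_mem_uIcc, hs⟩) j)
    (Or.inr ⟨p, left_mem_uIcc, hr⟩) i

end PairProfile

theorem exists_spans (hn : 1 < n) (p q : A) : ∃ R : Fin n → S0, Spans R p q := by
  obtain ⟨i, j, hij⟩ := Fintype.exists_pair_of_one_lt_card (by rwa [Fintype.card_fin])
  obtain ⟨r, hr, -⟩ := exists_isPeak_mem_uIcc_of_rel p p
  obtain ⟨s, hs, -⟩ := exists_isPeak_mem_uIcc_of_rel q q
  exact ⟨_, spans_pairProfile hij hr hs⟩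

namespace Spans

variable {R R' : Fin n → S0} {p q p' q' : A}

theorem apply_mem_uIcc_of_extend_left (h : Spans R p q) (h' : Spans R' p' q) (hn : 2 < n)
    (hP : PairwiseSP f) (hO : Onto f) (hp : p ∈ uIcc p' q) :
    f R ∈ uIcc p (f R') ∧ f R ∈ uIcc q (f R') := by
  obtain ⟨i, j, k, hij, hik, hjk⟩ := Fintype.two_lt_card_iff.1 (by rwa [Fintype.card_fin])
  obtain ⟨r, hr, hr_contour⟩ := exists_isPeak_mem_uIcc_of_rel p (f R')
  obtain ⟨s, hs, hs_contour⟩ := exists_isPeak_mem_uIcc_of_rel q (f R')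
  obtain ⟨t, ht, -⟩ := exists_isPeak_mem_uIcc_of_rel p' p'
  have hB := spans_pairProfile hij hr hs
  have hB' : Spans (update (pairProfile i j r s) k t) p' q :=
    { exists_isPeak_left := ⟨k, by rwa [update_self]⟩
      exists_isPeak_right := ⟨j, by rwa [update_of_ne hjk, pairProfile_right hij]⟩
      peakIn := PeakIn.update (fun l => (hB.peakIn l).mono (uIcc_subset_uIcc_right hp))
        (Or.inr ⟨p', left_mem_uIcc, ht⟩) k }
  have hrel (l : Fin n) : (pairProfile i j r s l).1.rel (f R) (f R') := by
    rw [hB.apply_eq h hn hP hO, hB'.apply_eq h' hn hP hO]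
    exact hP.rel_update_of_eq_R0 (pairProfile_of_ne hik.symm hjk.symm) l t
  refine ⟨hr_contour _ ?_, hs_contour _ ?_⟩
  · simpa only [pairProfile_left] using hrel i
  · simpa only [pairProfile_right hij] using hrel j

theorem apply_mem_uIcc_of_nested (h : Spans R p q) (h' : Spans R' p' q') (hn : 2 < n)
    (hP : PairwiseSP f) (hO : Onto f) (hp : p ∈ uIcc p' q) (hq : q ∈ uIcc p' q') :
    f R ∈ uIcc p (f R') ∧ f R ∈ uIcc q (f R') := by
  obtain ⟨M, hM⟩ := exists_spans (one_lt_two.trans hn) p' q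
  have hRM := h.apply_mem_uIcc_of_extend_left hM hn hP hO hp
  have hMR' := hM.symm.apply_mem_uIcc_of_extend_left h'.symm hn hP hO (uIcc_comm p' q' ▸ hq)
  have hR := h.apply_mem_uIcc hP hO
  have hM := hM.apply_mem_uIcc hP hO
  simp only [mem_uIcc] at *
  grind

end Spans

theorem isPeak_peak {R : Pref} (h : SinglePeaked R) : R.IsPeak (peak R) := by
  rw [peak, dif_pos h]
  exact h.choose_spec

theorem exists_spans_tmin_tmax {R : Fin n → S0} (hR : R ≠ indiffProfile n) :
    ∃ a b : A, a ≤ b ∧ Spans R a b ∧ tmin R = a ∧ tmax R = b := by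
  classical
  let active : Finset (Fin n) := {i | (R i).1 ≠ R0}
  have mem_active {i : Fin n} : i ∈ active ↔ (R i).1 ≠ R0 := by simp [active]
  have hne : active.Nonempty := by
    obtain ⟨i, hi⟩ := Function.ne_iff.1 hR
    exact ⟨i, mem_active.2 fun h => hi (Subtype.ext h)⟩
  have hpeak {i : Fin n} (hi : i ∈ active) : (R i).1.IsPeak (peak (R i).1) :=
    isPeak_peak ((R i).2.resolve_right (mem_active.1 hi))
  obtain ⟨i, hi, hmin⟩ := active.exists_min_image (fun l => peak (R l).1) hne
  obtain ⟨j, hj, hmax⟩ := active.exists_max_image (fun l => peak (R l).1) hne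
  have hij := hmin j hj
  refine ⟨_, _, hij, ⟨⟨i, hpeak hi⟩, ⟨j, hpeak hj⟩, fun k => ?_⟩,
    IsLeast.csInf_eq ⟨⟨i, mem_active.1 hi, rfl⟩, ?_⟩,
    IsGreatest.csSup_eq ⟨⟨j, mem_active.1 hj, rfl⟩, ?_⟩⟩
  · refine or_iff_not_imp_left.2 fun hk => ⟨_, ?_, hpeak (mem_active.2 hk)⟩
    exact mem_uIcc.2 (Or.inl ⟨hmin k (mem_active.2 hk), hmax k (mem_active.2 hk)⟩)
  · rintro _ ⟨k, hk, rfl⟩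
    exact hmin k (mem_active.2 hk)
  · rintro _ ⟨k, hk, rfl⟩
    exact hmax k (mem_active.2 hk)

end TargetRule

/-- For n ≥ 3, every onto and pairwise strategy-proof SCF is a
target rule with a default. -/
theorem stmt_0 (n : ℕ) (hn : 3 ≤ n) (f : (Fin n → S0) → A)
    (hOnto : Onto f) (hPSP : PairwiseSP f) : IsTargetRule f := by
  obtain ⟨M, hM⟩ := exists_spans (by omega : 1 < n) zeroA oneA
  refine ⟨f M, _, rfl, fun R hR => ?_⟩
  obtain ⟨a, b, hab, hspans, hmin, hmax⟩ := exists_spans_tmin_tmax hR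
  have ha : a ∈ Set.uIcc zeroA b := Set.mem_uIcc.2 (Or.inl ⟨a.2.1, hab⟩)
  have hb : b ∈ Set.uIcc zeroA oneA := Set.mem_uIcc.2 (Or.inl ⟨b.2.1, b.2.2⟩)
  have hmem := hspans.apply_mem_uIcc hPSP hOnto
  obtain ⟨hmem_a, hmem_b⟩ := hspans.apply_mem_uIcc_of_nested hM hn hPSP hOnto ha hb
  rw [hmin, hmax]
  simp only [Subtype.coe_le_coe, Subtype.coe_lt_coe, Subtype.coe_inj]
  rw [Set.mem_uIcc] at hmem hmem_a hmem_b
  grind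
end

section
/- Let n ≥ 2. Every target rule with a default f : S₀ⁿ → A is onto and pairwise strategy-proof. -/
/-!
A target rule clamps its target `x` to the interval spanned by the peaks, so under unanimity it
picks the common peak. Suppose a coalition moves the outcome from `z` to `w > z` and no member is
worse off. Then every non-indifferent member has its peak above `z`. A member who gains is one of
these, so the highest peak is above `z` and hence `x ≤ z`. The agent with the lowest peak, which
is at most `z`, is outside the coalition and keeps its preference. The new outcome `w` exceeds the
target, so it is at most that peak: a contradiction. Moves to the left are symmetric.
-/

namespace Pref

variable {R : Pref} {p q a b : A}

lemma P.ne_R0 (h : R.P a b) : R ≠ R0 := by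
  rintro rfl
  exact h.2 trivial

lemma P_irrefl : ¬ R.P a a := fun h => h.2 h.1

lemma IsPeak.lt_peak_of_rel (hp : R.IsPeak p) (h : R.rel b a) (hab : a < b) : a < p :=
  not_le.mp fun hpa => (hp a b (.inl ⟨hpa, hab⟩)).2 h

lemma IsPeak.peak_lt_of_rel (hp : R.IsPeak p) (h : R.rel b a) (hba : b < a) : p < a :=
  not_le.mp fun hap => (hp a b (.inr ⟨hba, hap⟩)).2 h

lemma IsPeak.P_of_ne (hp : R.IsPeak p) (hne : p ≠ q) : R.P p q :=
  hp p q <| hne.lt_or_gt.imp (⟨le_rfl, ·⟩) (⟨·, le_rfl⟩)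

lemma IsPeak.unique (hp : R.IsPeak p) (hq : R.IsPeak q) : p = q := by
  by_contra hne
  exact (hp.P_of_ne hne).2 (hq.P_of_ne (Ne.symm hne)).1

lemma IsPeak.ne_R0 (hp : R.IsPeak p) : R ≠ R0 :=
  have ⟨_, hne⟩ := exists_ne p
  (hp.P_of_ne hne.symm).ne_R0

lemma IsPeak.peak_eq (hp : R.IsPeak p) : peak R = p := by
  have hR : SinglePeaked R := ⟨p, hp⟩
  rw [peak, dif_pos hR]
  exact hR.choose_spec.unique hp

/-- The Euclidean preference with peak `p`, which ranks alternatives by their distance to `p`. -/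
def euclidean (p : A) : Pref where
  rel a b := dist a p ≤ dist b p
  total _ _ := le_total _ _
  trans _ _ _ := le_trans

lemma isPeak_euclidean (p : A) : (euclidean p).IsPeak p := by
  intro a b h
  have hlt : dist a p < dist b p := by
    simp only [Subtype.dist_eq, Real.dist_eq, ← Subtype.coe_le_coe, ← Subtype.coe_lt_coe] at h ⊢
    rcases h with ⟨hpa, hab⟩ | ⟨hba, hap⟩
    · rw [abs_of_nonneg, abs_of_nonneg] <;> linarith
    · rw [abs_of_nonpos, abs_of_nonpos] <;> linarith
  exact ⟨hlt.le, hlt.not_ge⟩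

end Pref

lemma S0.isPeak_peak {R : S0} (h : R.1 ≠ R0) : R.1.IsPeak (peak R.1) := by
  obtain ⟨p, hp⟩ := R.2.resolve_right h
  rwa [hp.peak_eq]

/-- The Euclidean preference as an element of the augmented domain. -/
def S0.euclidean (p : A) : S0 := ⟨.euclidean p, .inl ⟨p, Pref.isPeak_euclidean p⟩⟩

section Peaks

variable {n : ℕ} {R : Fin n → S0} {i : Fin n}

lemma ne_indiffProfile_iff : R ≠ indiffProfile n ↔ ∃ i, (R i).1 ≠ R0 :=
  Function.ne_iff.trans (exists_congr fun _ => Subtype.ext_iff.not)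

/-- The set `τ(R)` of the peaks of the non-indifferent agents, as real numbers. -/
def peakSet (R : Fin n → S0) : Set ℝ :=
  {x : ℝ | ∃ i : Fin n, (R i).1 ≠ R0 ∧ ((peak (R i).1 : ℝ) = x)}

lemma finite_peakSet (R : Fin n → S0) : (peakSet R).Finite :=
  (Set.finite_range fun i => (peak (R i).1 : ℝ)).subset fun _ ⟨i, _, hi⟩ => ⟨i, hi⟩

lemma nonempty_peakSet (hR : R ≠ indiffProfile n) : (peakSet R).Nonempty :=
  have ⟨i, hi⟩ := ne_indiffProfile_iff.mp hR
  ⟨_, i, hi, rfl⟩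

lemma tmin_le_peak (hi : (R i).1 ≠ R0) : tmin R ≤ peak (R i).1 :=
  csInf_le (finite_peakSet R).bddBelow ⟨i, hi, rfl⟩

lemma peak_le_tmax (hi : (R i).1 ≠ R0) : peak (R i).1 ≤ tmax R :=
  le_csSup (finite_peakSet R).bddAbove ⟨i, hi, rfl⟩

lemma exists_peak_eq_tmin (hR : R ≠ indiffProfile n) :
    ∃ i, (R i).1 ≠ R0 ∧ (peak (R i).1 : ℝ) = tmin R :=
  (nonempty_peakSet hR).csInf_mem (finite_peakSet R)

lemma exists_peak_eq_tmax (hR : R ≠ indiffProfile n) :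
    ∃ i, (R i).1 ≠ R0 ∧ (peak (R i).1 : ℝ) = tmax R :=
  (nonempty_peakSet hR).csSup_mem (finite_peakSet R)

lemma tmin_le_tmax (hR : R ≠ indiffProfile n) : tmin R ≤ tmax R :=
  have ⟨_, hi⟩ := ne_indiffProfile_iff.mp hR
  (tmin_le_peak hi).trans (peak_le_tmax hi)

end Peaks

/-- `f` is a target rule with target `x`: unless all agents are indifferent, it selects the point of
`[τ̲(R), τ̄(R)]` closest to `x`. The value of `f` at `R^{0N}` is left free. -/
def HasTarget {n : ℕ} (f : (Fin n → S0) → A) (x : A) : Prop :=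
  ∀ R : Fin n → S0, R ≠ indiffProfile n → (f R : ℝ) = max (tmin R) (min (x : ℝ) (tmax R))

section TargetRules

variable {n : ℕ} {f : (Fin n → S0) → A}

lemma IsTargetRule.exists_hasTarget (hT : IsTargetRule f) : ∃ x, HasTarget f x := by
  obtain ⟨x, -, -, hx⟩ := hT
  refine ⟨x, fun R hR => ?_⟩
  obtain ⟨hmid, hlow, hhigh⟩ := hx R hR
  have hle := tmin_le_tmax hR
  rcases lt_or_ge (x : ℝ) (tmin R) with hxmin | hxmin
  · rw [hlow hxmin, max_eq_left (min_le_of_left_le hxmin.le)]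
  rcases lt_or_ge (tmax R) (x : ℝ) with hxmax | hxmax
  · rw [hhigh hxmax, min_eq_right hxmax.le, max_eq_right hle]
  · rw [hmid ⟨hxmin, hxmax⟩, min_eq_left hxmax, max_eq_right hxmin]

namespace HasTarget

variable {x : A} {R R' : Fin n → S0} {i : Fin n} {S : Finset (Fin n)}

lemma exists_peak_le (hf : HasTarget f x) (hR : R ≠ indiffProfile n) :
    ∃ i, (R i).1 ≠ R0 ∧ peak (R i).1 ≤ f R := by
  obtain ⟨i, hi, hmin⟩ := exists_peak_eq_tmin hR
  refine ⟨i, hi, Subtype.coe_le_coe.mp ?_⟩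
  rw [hmin, hf R hR]
  exact le_max_left _ _

lemma exists_le_peak (hf : HasTarget f x) (hR : R ≠ indiffProfile n) :
    ∃ i, (R i).1 ≠ R0 ∧ f R ≤ peak (R i).1 := by
  obtain ⟨i, hi, hmax⟩ := exists_peak_eq_tmax hR
  refine ⟨i, hi, Subtype.coe_le_coe.mp ?_⟩
  rw [hmax, hf R hR]
  exact max_le (tmin_le_tmax hR) (min_le_right _ _)

lemma target_le_of_lt_peak (hf : HasTarget f x) (hi : (R i).1 ≠ R0) (h : f R < peak (R i).1) :
    x ≤ f R := by
  have hmin : min (x : ℝ) (tmax R) ≤ f R :=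
    (le_max_right _ _).trans_eq (hf R (ne_indiffProfile_iff.mpr ⟨i, hi⟩)).symm
  exact (min_le_iff.mp hmin).resolve_right
    ((Subtype.coe_lt_coe.mpr h).trans_le (peak_le_tmax hi)).not_ge

lemma le_target_of_peak_lt (hf : HasTarget f x) (hi : (R i).1 ≠ R0) (h : peak (R i).1 < f R) :
    f R ≤ x := by
  have hmax : (f R : ℝ) ≤ max (tmin R) x :=
    (hf R (ne_indiffProfile_iff.mpr ⟨i, hi⟩)).trans_le (max_le_max_left _ (min_le_left _ _))
  exact (le_max_iff.mp hmax).resolve_left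
    ((tmin_le_peak hi).trans_lt (Subtype.coe_lt_coe.mpr h)).not_ge

lemma eq_of_forall_peak_eq (hf : HasTarget f x) (hR : R ≠ indiffProfile n) {a : A}
    (ha : ∀ i, (R i).1 ≠ R0 → peak (R i).1 = a) : f R = a := by
  obtain ⟨i, hi, hle⟩ := hf.exists_peak_le hR
  obtain ⟨k, hk, hge⟩ := hf.exists_le_peak hR
  rw [ha i hi] at hle
  rw [ha k hk] at hge
  exact le_antisymm hge hle

lemma onto [NeZero n] (hf : HasTarget f x) : Onto f := by
  intro a
  have ha := Pref.isPeak_euclidean a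
  exact ⟨fun _ => S0.euclidean a, hf.eq_of_forall_peak_eq
    (ne_indiffProfile_iff.mpr ⟨0, ha.ne_R0⟩) fun _ _ => ha.peak_eq⟩

lemma deviation_le (hf : HasTarget f x) (hout : ∀ i ∉ S, R' i = R i)
    (hin : ∀ i ∈ S, (R i).1.rel (f R') (f R)) (hS : ∃ j ∈ S, (R j).1 ≠ R0) : f R' ≤ f R := by
  by_contra! hlt
  obtain ⟨j, hjS, hj⟩ := hS
  have above : ∀ i ∈ S, (R i).1 ≠ R0 → f R < peak (R i).1 := fun i hiS hi =>
    (S0.isPeak_peak hi).lt_peak_of_rel (hin i hiS) hlt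
  have target_le : x ≤ f R := hf.target_le_of_lt_peak hj (above j hjS hj)
  obtain ⟨i, hi, hile⟩ := hf.exists_peak_le (ne_indiffProfile_iff.mpr ⟨j, hj⟩)
  have same : R' i = R i := hout i fun hiS => (above i hiS hi).not_ge hile
  rw [← same] at hi hile
  exact (target_le.trans_lt hlt).not_ge (hf.le_target_of_peak_lt hi (hile.trans_lt hlt))

lemma le_deviation (hf : HasTarget f x) (hout : ∀ i ∉ S, R' i = R i)
    (hin : ∀ i ∈ S, (R i).1.rel (f R') (f R)) (hS : ∃ j ∈ S, (R j).1 ≠ R0) : f R ≤ f R' := by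
  by_contra! hlt
  obtain ⟨j, hjS, hj⟩ := hS
  have below : ∀ i ∈ S, (R i).1 ≠ R0 → peak (R i).1 < f R := fun i hiS hi =>
    (S0.isPeak_peak hi).peak_lt_of_rel (hin i hiS) hlt
  have le_target : f R ≤ x := hf.le_target_of_peak_lt hj (below j hjS hj)
  obtain ⟨i, hi, hige⟩ := hf.exists_le_peak (ne_indiffProfile_iff.mpr ⟨j, hj⟩)
  have same : R' i = R i := hout i fun hiS => (below i hiS hi).not_ge hige
  rw [← same] at hi hige
  exact (hlt.trans_le le_target).not_ge (hf.target_le_of_lt_peak hi (hlt.trans_le hige))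

lemma groupSP (hf : HasTarget f x) : GroupSP f := by
  rintro S - ⟨R, R', hout, hin, j, hjS, hj⟩
  have hS : ∃ j ∈ S, (R j).1 ≠ R0 := ⟨j, hjS, hj.ne_R0⟩
  rw [(hf.deviation_le hout hin hS).antisymm (hf.le_deviation hout hin hS)] at hj
  exact Pref.P_irrefl hj

end HasTarget

lemma GroupSP.pairwiseSP (hf : GroupSP f) : PairwiseSP f := fun S hS _ => hf S hS

theorem stmt_1_general [NeZero n] (hT : IsTargetRule f) : Onto f ∧ GroupSP f :=
  have ⟨_, hx⟩ := hT.exists_hasTarget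
  ⟨hx.onto, hx.groupSP⟩

end TargetRules

/-- For n ≥ 2, every target rule with a default is onto and
pairwise strategy-proof. -/
theorem stmt_1 (n : ℕ) (hn : 2 ≤ n) (f : (Fin n → S0) → A)
    (hT : IsTargetRule f) : Onto f ∧ PairwiseSP f := by
  have : NeZero n := ⟨by omega⟩
  exact (stmt_1_general hT).imp_right GroupSP.pairwiseSP
end

section
/- Let n ≥ 3 and let f : S₀ⁿ → A be onto and pairwise strategy-proof. Let R ∈ S₀ⁿ be a profile such that for some agents i, j ∈ N, R_i and R_j are single-peaked with τ(R_i) = 0 and τ(R_j) = 1. Then for every agent k ∈ N \ {i, j} and every preference R'_k ∈ S₀, f(R'_k, R_{-k}) = f(R). -/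
/-!
Give agent `k` the indifferent preference. Then `k` joins any coalition at no cost, so no misreport
by `k` can strictly benefit `i` or `j`. But a move from an outcome `b` to an outcome `a ≠ b` lying
between the peaks of `i` and `j` strictly benefits `i` if `a < b` and `j` if `b < a`. Hence every
outcome between the two peaks that `k` can induce equals the outcome under indifference.
-/

/-- The completely indifferent preference R⁰ as an element of the domain S₀. -/
def S0.indiff : S0 := ⟨R0, Or.inr rfl⟩

theorem Pref.IsPeak.eq_of_mem_Icc_of_not_P {R R' : Pref} {p q a b : A} (hp : R.IsPeak p)
    (hq : R'.IsPeak q) (ha : a ∈ Set.Icc p q) (h : ¬ R.P a b) (h' : ¬ R'.P a b) : a = b := by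
  rcases lt_trichotomy a b with hab | hab | hba
  · exact absurd (hp a b (Or.inl ⟨ha.1, hab⟩)) h
  · exact hab
  · exact absurd (hq a b (Or.inr ⟨hba, ha.2⟩)) h'

theorem mem_Icc_zeroA_oneA (a : A) : a ∈ Set.Icc zeroA oneA :=
  ⟨a.2.1, a.2.2⟩

section SocialChoice

variable {n : ℕ} {f : (Fin n → S0) → A}

theorem PairwiseSP.coalitionSP_pair (hf : PairwiseSP f) (k i : Fin n) : CoalitionSP f {k, i} :=
  hf {k, i} (Finset.insert_nonempty k {i}) Finset.card_le_two

theorem CoalitionSP.not_P_of_forall_ne_eq_R0 {S : Finset (Fin n)} (hS : CoalitionSP f S)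
    {R R' : Fin n → S0} {i : Fin n} (hi : i ∈ S) (hR' : ∀ l ∉ S, R' l = R l)
    (hR0 : ∀ l ∈ S, l ≠ i → (R l).1 = R0) : ¬ (R i).1.P (f R') (f R) := by
  intro hgain
  refine hS ⟨R, R', hR', fun l hl => ?_, i, hi, hgain⟩
  by_cases hli : l = i
  · exact hli ▸ hgain.1
  · rw [hR0 l hl hli]
    trivial

theorem CoalitionSP.not_P_update_of_eq_R0 {k i : Fin n} (hf : CoalitionSP f {k, i})
    {R : Fin n → S0} (hk : (R k).1 = R0) (r : S0) :
    ¬ (R i).1.P (f (Function.update R k r)) (f R) := by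
  refine hf.not_P_of_forall_ne_eq_R0 (by simp) (fun l hl => ?_) (fun l hl hli => ?_)
  · have hlk : l ≠ k := fun h => hl (by simp [h])
    exact Function.update_of_ne hlk r R
  · obtain rfl : l = k := by simpa [hli] using hl
    exact hk

variable {R : Fin n → S0} {i j k : Fin n} {p q : A}

theorem CoalitionSP.update_eq_of_eq_R0 (hfi : CoalitionSP f {k, i}) (hfj : CoalitionSP f {k, j})
    (hi : (R i).1.IsPeak p) (hj : (R j).1.IsPeak q) (hk : (R k).1 = R0) {r : S0}
    (hr : f (Function.update R k r) ∈ Set.Icc p q) : f (Function.update R k r) = f R :=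
  hi.eq_of_mem_Icc_of_not_P hj hr (hfi.not_P_update_of_eq_R0 hk r) (hfj.not_P_update_of_eq_R0 hk r)

theorem CoalitionSP.update_eq_update_indiff (hfi : CoalitionSP f {k, i})
    (hfj : CoalitionSP f {k, j}) (hi : (R i).1.IsPeak p) (hj : (R j).1.IsPeak q) (hki : k ≠ i)
    (hkj : k ≠ j) {r : S0} (hr : f (Function.update R k r) ∈ Set.Icc p q) :
    f (Function.update R k r) = f (Function.update R k S0.indiff) := by
  have hi' : (Function.update R k S0.indiff i).1.IsPeak p := by
    rwa [Function.update_of_ne hki.symm]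
  have hj' : (Function.update R k S0.indiff j).1.IsPeak q := by
    rwa [Function.update_of_ne hkj.symm]
  have hk : (Function.update R k S0.indiff k).1 = R0 := by
    rw [Function.update_self, S0.indiff]
  rw [← Function.update_idem (β := fun _ => S0) S0.indiff r R] at hr ⊢
  exact hfi.update_eq_of_eq_R0 hfj hi' hj' hk hr

theorem stmt_8_general (hfi : CoalitionSP f {k, i}) (hfj : CoalitionSP f {k, j})
    (hi : (R i).1.IsPeak p) (hj : (R j).1.IsPeak q) (hki : k ≠ i) (hkj : k ≠ j) {r : S0}
    (hR : f R ∈ Set.Icc p q) (hr : f (Function.update R k r) ∈ Set.Icc p q) :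
    f (Function.update R k r) = f R := by
  rw [← Function.update_eq_self k R] at hR
  calc
    f (Function.update R k r) = f (Function.update R k S0.indiff) :=
      hfi.update_eq_update_indiff hfj hi hj hki hkj hr
    _ = f (Function.update R k (R k)) := (hfi.update_eq_update_indiff hfj hi hj hki hkj hR).symm
    _ = f R := by rw [Function.update_eq_self]

end SocialChoice

/-- If some agents i and j have single-peaked preferences with
peaks 0 and 1 respectively, then changing the preference of any other agent k
does not change the outcome. -/
theorem stmt_8 (n : ℕ) (hn : 3 ≤ n) (f : (Fin n → S0) → A)
    (hOnto : Onto f) (hPSP : PairwiseSP f)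
    (R : Fin n → S0) (i j : Fin n)
    (hi : (R i).1.IsPeak zeroA) (hj : (R j).1.IsPeak oneA)
    (k : Fin n) (hki : k ≠ i) (hkj : k ≠ j) (Rk' : S0) :
    f (Function.update R k Rk') = f R :=
  stmt_8_general (hPSP.coalitionSP_pair k i) (hPSP.coalitionSP_pair k j) hi hj hki hkj
    (mem_Icc_zeroA_oneA _) (mem_Icc_zeroA_oneA _)
end

section
/- Let n ≥ 3 and let f : S₀ⁿ → A be onto and pairwise strategy-proof. Then for any two profiles R, R' ∈ S₀ⁿ such that every agent in each profile has a single-peaked preference, exactly one agent in each profile has peak 1, and all other agents have peak 0, it holds that f(R) = f(R'). -/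
/-!
An indifferent agent goes along with any deviation, so pairwise strategy-proofness forbids such an
agent from helping anyone else by changing its report. If `i` has peak `1` and `k` has peak `0`,
their preferences are opposite, and hence no third agent can move the outcome at all. With at least
three agents, the roles of `i` and `k` can then be handed over to any other pair one agent at a
time, without changing the outcome on the way.
-/

theorem zeroA_le (a : A) : zeroA ≤ a := a.2.1

theorem le_oneA (a : A) : a ≤ oneA := a.2.2

theorem zeroA_ne_oneA : zeroA ≠ oneA :=
  fun h => zero_ne_one (congrArg Subtype.val h)

namespace Pref

variable {R R' : Pref} {p q a b : A}

theorem rel_refl (R : Pref) (a : A) : R.rel a a :=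
  (R.total a a).elim id id

theorem rel_of_not_P (h : ¬ R.P a b) : R.rel b a :=
  (R.total a b).elim (fun hab => by_contra fun hba => h ⟨hab, hba⟩) id

theorem eq_of_rel_iff (h : ∀ a b, R.rel a b ↔ R'.rel a b) : R = R' := by
  cases R
  cases R'
  congr
  ext a b
  exact h a b

namespace IsPeak

theorem eq (hp : R.IsPeak p) (hq : R.IsPeak q) : p = q := by
  by_contra hne
  wlog hlt : p < q generalizing p q
  · exact this hq hp (Ne.symm hne) ((not_lt.mp hlt).lt_of_ne' hne)
  exact (hp p q (.inl ⟨le_rfl, hlt⟩)).2 (hq q p (.inr ⟨hlt, le_rfl⟩)).1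

theorem rel_iff_le (h : R.IsPeak p) (ha : p ≤ a) (hb : p ≤ b) : R.rel a b ↔ a ≤ b := by
  refine ⟨fun hab => le_of_not_gt fun hlt => (h b a (.inl ⟨hb, hlt⟩)).2 hab, fun hle => ?_⟩
  rcases hle.eq_or_lt with rfl | hlt
  · exact R.rel_refl a
  · exact (h a b (.inl ⟨ha, hlt⟩)).1

theorem rel_iff_ge (h : R.IsPeak p) (ha : a ≤ p) (hb : b ≤ p) : R.rel a b ↔ b ≤ a := by
  refine ⟨fun hab => le_of_not_gt fun hlt => (h b a (.inr ⟨hlt, hb⟩)).2 hab, fun hle => ?_⟩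
  rcases hle.eq_or_lt with rfl | hlt
  · exact R.rel_refl b
  · exact (h a b (.inr ⟨hlt, ha⟩)).1

theorem eq_of_zeroA (h : R.IsPeak zeroA) (h' : R'.IsPeak zeroA) : R = R' :=
  eq_of_rel_iff fun a b => by
    rw [h.rel_iff_le (zeroA_le a) (zeroA_le b), h'.rel_iff_le (zeroA_le a) (zeroA_le b)]

theorem eq_of_oneA (h : R.IsPeak oneA) (h' : R'.IsPeak oneA) : R = R' :=
  eq_of_rel_iff fun a b => by
    rw [h.rel_iff_ge (le_oneA a) (le_oneA b), h'.rel_iff_ge (le_oneA a) (le_oneA b)]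

end IsPeak

end Pref

/-- The profile `R` is polarized by the agents `i` and `k`: agent `i` has peak `1` and agent `k`
has peak `0`, so that they rank any two alternatives in opposite ways. The other agents are
arbitrary, possibly indifferent. -/
structure PolarizedBy {n : ℕ} (R : Fin n → S0) (i k : Fin n) : Prop where
  top : (R i).1.IsPeak oneA
  bot : (R k).1.IsPeak zeroA

section

variable {n : ℕ} {R R' : Fin n → S0} {i j k l : Fin n}

theorem PolarizedBy.ne (h : PolarizedBy R i k) : i ≠ k := by
  rintro rfl
  exact zeroA_ne_oneA (h.bot.eq h.top)

theorem PolarizedBy.update (h : PolarizedBy R i k) (hji : j ≠ i) (hjk : j ≠ k) (Q : S0) :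
    PolarizedBy (Function.update R j Q) i k where
  top := by simpa only [Function.update_of_ne hji.symm] using h.top
  bot := by simpa only [Function.update_of_ne hjk.symm] using h.bot

theorem PolarizedBy.piecewise (h : PolarizedBy R i k) (h' : PolarizedBy R' i k)
    (s : Finset (Fin n)) : PolarizedBy (s.piecewise R' R) i k where
  top := s.piecewise_cases R' R (fun Q => Q.1.IsPeak oneA) h'.top h.top
  bot := s.piecewise_cases R' R (fun Q => Q.1.IsPeak zeroA) h'.bot h.bot

theorem PolarizedBy.eq_of_rel (h : PolarizedBy R i k) {a b : A}
    (hi : (R i).1.rel a b) (hk : (R k).1.rel a b) : a = b :=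
  le_antisymm ((h.bot.rel_iff_le (zeroA_le a) (zeroA_le b)).mp hk)
    ((h.top.rel_iff_ge (le_oneA a) (le_oneA b)).mp hi)

namespace PairwiseSP

variable {f : (Fin n → S0) → A}

theorem rel_update_of_eq_R0_s9 (hf : PairwiseSP f) (hj : (R j).1 = R0) (i : Fin n) (Q : S0) :
    (R i).1.rel (f R) (f (Function.update R j Q)) := by
  refine Pref.rel_of_not_P fun hP => hf {i, j} (Finset.insert_nonempty i {j}) Finset.card_le_two
    ⟨R, Function.update R j Q, fun m hm => ?_, fun m hm => ?_, i, Finset.mem_insert_self i {j}, hP⟩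
  · exact Function.update_of_ne
      (fun hmj => hm (Finset.mem_insert_of_mem (Finset.mem_singleton.mpr hmj))) Q R
  · rcases Finset.mem_insert.mp hm with rfl | hmj
    · exact hP.1
    · rw [Finset.mem_singleton.mp hmj, hj]
      trivial

theorem map_update_of_eq_R0 (hf : PairwiseSP f) (hR : PolarizedBy R i k) (hj : (R j).1 = R0)
    (Q : S0) : f (Function.update R j Q) = f R :=
  (hR.eq_of_rel (hf.rel_update_of_eq_R0_s9 hj i Q) (hf.rel_update_of_eq_R0_s9 hj k Q)).symm

theorem map_update_of_ne (hf : PairwiseSP f) (hR : PolarizedBy R i k) (hji : j ≠ i) (hjk : j ≠ k)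
    (Q : S0) : f (Function.update R j Q) = f R := by
  let T := Function.update R j (indiffProfile n j)
  have hTj : (T j).1 = R0 := congrArg Subtype.val (Function.update_self j (indiffProfile n j) R)
  have map_eq_map_T (Q' : S0) : f (Function.update R j Q') = f T := by
    simpa only [T, Function.update_idem] using
      hf.map_update_of_eq_R0 (hR.update hji hjk _) hTj Q'
  calc f (Function.update R j Q) = f T := map_eq_map_T Q
    _ = f (Function.update R j (R j)) := (map_eq_map_T (R j)).symm
    _ = f R := by rw [Function.update_eq_self]

theorem map_update (hf : PairwiseSP f) (hR : PolarizedBy R i k) {Q : S0}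
    (hRQ : PolarizedBy (Function.update R j Q) i k) : f (Function.update R j Q) = f R := by
  by_cases hji : j = i
  · subst hji
    have hQ : Q = R j := Subtype.ext <| by simpa using hRQ.top.eq_of_oneA hR.top
    rw [hQ, Function.update_eq_self]
  by_cases hjk : j = k
  · subst hjk
    have hQ : Q = R j := Subtype.ext <| by simpa using hRQ.bot.eq_of_zeroA hR.bot
    rw [hQ, Function.update_eq_self]
  exact hf.map_update_of_ne hR hji hjk Q

theorem map_eq_of_polarizedBy (hf : PairwiseSP f) (hR : PolarizedBy R i k)
    (hR' : PolarizedBy R' i k) : f R = f R' := by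
  have map_piecewise (s : Finset (Fin n)) : f (s.piecewise R' R) = f R := by
    induction s using Finset.induction_on with
    | empty => rw [Finset.piecewise_empty]
    | insert j s _ ih =>
      have hsj := hR.piecewise hR' (insert j s)
      rw [Finset.piecewise_insert] at hsj ⊢
      rw [hf.map_update (hR.piecewise hR' s) hsj, ih]
  simpa only [Finset.piecewise_univ] using (map_piecewise Finset.univ).symm

theorem map_eq_of_polarizedBy_of_ne (hf : PairwiseSP f) (hR : PolarizedBy R i k)
    (hR' : PolarizedBy R' j l) (hjk : j ≠ k) : f R = f R' := by
  let T := Function.update (fun _ => R i) k (R k)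
  let T' := Function.update (fun _ => R k) j (R i)
  have hT (m : Fin n) (hmk : m ≠ k) : PolarizedBy T m k :=
    ⟨by simpa [T, hmk] using hR.top, by simpa [T] using hR.bot⟩
  have hT' (m : Fin n) (hmj : m ≠ j) : PolarizedBy T' j m :=
    ⟨by simpa [T'] using hR.top, by simpa [T', hmj] using hR.bot⟩
  calc f R = f T := hf.map_eq_of_polarizedBy hR (hT i hR.ne)
    _ = f T' := hf.map_eq_of_polarizedBy (hT j hjk) (hT' k hjk.symm)
    _ = f R' := hf.map_eq_of_polarizedBy (hT' l hR'.ne.symm) hR'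

end PairwiseSP

end

theorem stmt_9_general {n : ℕ} (hn : 3 ≤ n) {f : (Fin n → S0) → A} (hf : PairwiseSP f)
    {R R' : Fin n → S0} (hR : ∃ i k, PolarizedBy R i k) (hR' : ∃ j l, PolarizedBy R' j l) :
    f R = f R' := by
  obtain ⟨i, k, hR⟩ := hR
  obtain ⟨j, l, hR'⟩ := hR'
  by_cases hjk : j = k
  · subst hjk
    obtain ⟨m, hmi, hmj⟩ := Fin.exists_ne_and_ne_of_two_lt i j hn
    let T := Function.update (fun _ => R j) m (R i)
    have hT : PolarizedBy T m i :=
      ⟨by simpa [T] using hR.top, by simpa [T, hmi.symm] using hR.bot⟩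
    calc f R = f T := hf.map_eq_of_polarizedBy_of_ne hR hT hmj
      _ = f R' := hf.map_eq_of_polarizedBy_of_ne hT hR' hR.ne.symm
  · exact hf.map_eq_of_polarizedBy_of_ne hR hR' hjk

/-- Any two profiles in which all agents are single-peaked,
exactly one agent has peak 1 and all others have peak 0, yield the same
outcome. -/
theorem stmt_9 (n : ℕ) (hn : 3 ≤ n) (f : (Fin n → S0) → A)
    (hOnto : Onto f) (hPSP : PairwiseSP f)
    (R R' : Fin n → S0)
    (hR : ∃ i : Fin n, (R i).1.IsPeak oneA ∧
      ∀ k : Fin n, k ≠ i → (R k).1.IsPeak zeroA)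
    (hR' : ∃ i : Fin n, (R' i).1.IsPeak oneA ∧
      ∀ k : Fin n, k ≠ i → (R' k).1.IsPeak zeroA) :
    f R = f R' := by
  obtain ⟨i, hi, hzero⟩ := hR
  obtain ⟨j, hj, hzero'⟩ := hR'
  obtain ⟨k, hki, hkj⟩ := Fin.exists_ne_and_ne_of_two_lt i j hn
  exact stmt_9_general hn hPSP ⟨i, k, hi, hzero k hki⟩ ⟨j, k, hj, hzero' k hkj⟩
end
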